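/- Second-order approximate solution property of the HJBI equation along the candidate strategy and candidate volatility: there exist constants C > 0 and ψ₀ > 0 such that for all (t,s,y) ∈ D and all ψ ∈ (0,ψ₀), |w^ψ_t(t,s,y) + H^ψ(t,s,y; θ^ψ(t,s,y), σ^ψ(t,s,y))| ≤ C ψ³. -/

import Mathlib

open Set

/-- The data of the hedging problem with small uncertainty aversion: the constants
`T, K, ε, y_l, y_u`, the reference volatility `σ̄` (`sb`), the reference value `V̄` (`V`)
with its `s`-derivatives `Vs, Vss`, the penalty function `f` with its `ς`-derivatives
`f1, ..., f4`, the utility `U` with derivatives `U1, U2, U3`, and the correction terms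
`w̃` (`wt`) and `ŵ` (`wh`) together with their partial derivatives. -/
structure HedgeData where
  T : ℝ
  K : ℝ
  eps : ℝ
  yl : ℝ
  yu : ℝ
  sb : ℝ → ℝ → ℝ
  V : ℝ → ℝ → ℝ
  Vs : ℝ → ℝ → ℝ
  Vss : ℝ → ℝ → ℝ
  f : ℝ → ℝ → ℝ → ℝ → ℝ
  f1 : ℝ → ℝ → ℝ → ℝ → ℝ
  f2 : ℝ → ℝ → ℝ → ℝ → ℝ
  f3 : ℝ → ℝ → ℝ → ℝ → ℝ
  f4 : ℝ → ℝ → ℝ → ℝ → ℝ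
  U : ℝ → ℝ
  U1 : ℝ → ℝ
  U2 : ℝ → ℝ
  U3 : ℝ → ℝ
  wt : ℝ → ℝ → ℝ → ℝ
  wtT : ℝ → ℝ → ℝ → ℝ
  wtS : ℝ → ℝ → ℝ → ℝ
  wtY : ℝ → ℝ → ℝ → ℝ
  wtSS : ℝ → ℝ → ℝ → ℝ
  wtSY : ℝ → ℝ → ℝ → ℝ
  wtYY : ℝ → ℝ → ℝ → ℝ
  wh : ℝ → ℝ → ℝ → ℝ
  whT : ℝ → ℝ → ℝ → ℝ
  whS : ℝ → ℝ → ℝ → ℝ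
  whY : ℝ → ℝ → ℝ → ℝ
  whSS : ℝ → ℝ → ℝ → ℝ
  whSY : ℝ → ℝ → ℝ → ℝ
  whYY : ℝ → ℝ → ℝ → ℝ

/-- The candidate value function `w^ψ(t,s,y) = U(y) - U'(y) w̃(t,s,y) ψ + U'(y) ŵ(t,s,y) ψ²`. -/
noncomputable def HedgeData.wPsi (d : HedgeData) (ψ t s y : ℝ) : ℝ :=
  d.U y - d.U1 y * d.wt t s y * ψ + d.U1 y * d.wh t s y * ψ ^ 2

/-- Partial derivative `w^ψ_t`. -/
noncomputable def HedgeData.wPsiT (d : HedgeData) (ψ t s y : ℝ) : ℝ :=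
  -(d.U1 y * d.wtT t s y) * ψ + d.U1 y * d.whT t s y * ψ ^ 2

/-- Partial derivative `w^ψ_y`. -/
noncomputable def HedgeData.wPsiY (d : HedgeData) (ψ t s y : ℝ) : ℝ :=
  d.U1 y - (d.U2 y * d.wt t s y + d.U1 y * d.wtY t s y) * ψ
    + (d.U2 y * d.wh t s y + d.U1 y * d.whY t s y) * ψ ^ 2

/-- Partial derivative `w^ψ_ss`. -/
noncomputable def HedgeData.wPsiSS (d : HedgeData) (ψ t s y : ℝ) : ℝ :=
  -(d.U1 y * d.wtSS t s y) * ψ + d.U1 y * d.whSS t s y * ψ ^ 2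

/-- Partial derivative `w^ψ_sy`. -/
noncomputable def HedgeData.wPsiSY (d : HedgeData) (ψ t s y : ℝ) : ℝ :=
  -(d.U2 y * d.wtS t s y + d.U1 y * d.wtSY t s y) * ψ
    + (d.U2 y * d.whS t s y + d.U1 y * d.whSY t s y) * ψ ^ 2

/-- Partial derivative `w^ψ_yy`. -/
noncomputable def HedgeData.wPsiYY (d : HedgeData) (ψ t s y : ℝ) : ℝ :=
  d.U2 y - (d.U3 y * d.wt t s y + 2 * d.U2 y * d.wtY t s y + d.U1 y * d.wtYY t s y) * ψ
    + (d.U3 y * d.wh t s y + 2 * d.U2 y * d.whY t s y + d.U1 y * d.whYY t s y) * ψ ^ 2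

/-- `σ̃(t,s,y) = σ̄(t,s) s² V̄_ss(t,s) / f''(t,s,y;σ̄(t,s))`. -/
noncomputable def HedgeData.sigmaTilde (d : HedgeData) (t s y : ℝ) : ℝ :=
  d.sb t s * s ^ 2 * d.Vss t s / d.f2 t s y (d.sb t s)

/-- `θ̃(t,s,y) = w̃_s(t,s,y) + (U'(y)/U''(y)) w̃_sy(t,s,y)`. -/
noncomputable def HedgeData.thetaTilde (d : HedgeData) (t s y : ℝ) : ℝ :=
  d.wtS t s y + d.U1 y / d.U2 y * d.wtSY t s y

/-- The candidate volatility `σ^ψ = σ̄ + σ̃ ψ`. -/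
noncomputable def HedgeData.sigmaPsi (d : HedgeData) (ψ t s y : ℝ) : ℝ :=
  d.sb t s + d.sigmaTilde t s y * ψ

/-- The candidate strategy `θ^ψ = V̄_s + θ̃ ψ`. -/
noncomputable def HedgeData.thetaPsi (d : HedgeData) (ψ t s y : ℝ) : ℝ :=
  d.Vs t s + d.thetaTilde t s y * ψ

/-- The Hamiltonian `H^ψ(t,s,y;ϑ,ς)`. -/
noncomputable def HedgeData.Ham (d : HedgeData) (ψ t s y ϑ ς : ℝ) : ℝ :=
  1 / ψ * d.U1 y * d.f t s y ς
    + 1 / 2 * s ^ 2 * d.Vss t s * ((d.sb t s) ^ 2 - ς ^ 2) * d.wPsiY ψ t s y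
    + 1 / 2 * ς ^ 2 * s ^ 2 *
      (d.wPsiSS ψ t s y + 2 * (ϑ - d.Vs t s) * d.wPsiSY ψ t s y
        + (ϑ - d.Vs t s) ^ 2 * d.wPsiYY ψ t s y)

/-- The standing assumptions (Assumption 3.1 of the paper). -/
structure HedgeData.Assumptions (d : HedgeData) : Prop where
  hT : 0 < d.T
  hK : 1 < d.K
  heps : 0 < d.eps
  hy : d.yl < d.yu
  sb_mem : ∀ t ∈ Icc (0:ℝ) d.T, ∀ s ∈ Icc d.K⁻¹ d.K, d.sb t s ∈ Icc (0:ℝ) d.K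
  sb_lb : ∀ t ∈ Icc (0:ℝ) d.T, ∀ s ∈ Ioo d.K⁻¹ d.K, d.eps ≤ d.sb t s
  sb_ub : ∀ t ∈ Icc (0:ℝ) d.T, ∀ s ∈ Ioo d.K⁻¹ d.K, d.sb t s ≤ d.K - d.eps
  sb_bdry : ∀ t ∈ Icc (0:ℝ) d.T, d.sb t d.K⁻¹ = 0 ∧ d.sb t d.K = 0
  V_derivS : ∀ t ∈ Ioo (0:ℝ) d.T, ∀ s ∈ Ioo d.K⁻¹ d.K, HasDerivAt (d.V t) (d.Vs t s) s
  V_derivSS : ∀ t ∈ Ioo (0:ℝ) d.T, ∀ s ∈ Ioo d.K⁻¹ d.K, HasDerivAt (d.Vs t) (d.Vss t s) s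
  Vss_cont : ∀ t ∈ Ioo (0:ℝ) d.T, ContinuousOn (d.Vss t) (Ioo d.K⁻¹ d.K)
  Vss_bdd : ∀ t ∈ Ioo (0:ℝ) d.T, ∀ s ∈ Ioo d.K⁻¹ d.K, |s ^ 2 * d.Vss t s| ≤ d.K
  f_deriv1 : ∀ t s y ς : ℝ, HasDerivAt (d.f t s y) (d.f1 t s y ς) ς
  f_deriv2 : ∀ t s y ς : ℝ, HasDerivAt (d.f1 t s y) (d.f2 t s y ς) ς
  f_deriv3 : ∀ t s y ς : ℝ, HasDerivAt (d.f2 t s y) (d.f3 t s y ς) ς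
  f_deriv4 : ∀ t s y ς : ℝ, HasDerivAt (d.f3 t s y) (d.f4 t s y ς) ς
  f4_cont : ∀ t s y : ℝ, Continuous (d.f4 t s y)
  f_nonneg : ∀ t s y ς : ℝ, 0 ≤ ς → 0 ≤ d.f t s y ς
  f_min : ∀ t ∈ Ioo (0:ℝ) d.T, ∀ s ∈ Ioo d.K⁻¹ d.K, ∀ y ∈ Ioo d.yl d.yu,
    d.f t s y (d.sb t s) = 0 ∧ d.f1 t s y (d.sb t s) = 0
  f2_bdd : ∀ t ∈ Ioo (0:ℝ) d.T, ∀ s ∈ Ioo d.K⁻¹ d.K, ∀ y ∈ Ioo d.yl d.yu,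
    ∀ ς ∈ Icc (0:ℝ) d.K, 1 / d.K ≤ d.f2 t s y ς ∧ d.f2 t s y ς ≤ d.K
  f34_bdd : ∀ t ∈ Ioo (0:ℝ) d.T, ∀ s ∈ Ioo d.K⁻¹ d.K, ∀ y ∈ Ioo d.yl d.yu,
    ∀ ς ∈ Icc (0:ℝ) d.K, |d.f3 t s y ς| ≤ d.K ∧ |d.f4 t s y ς| ≤ d.K
  U_deriv1 : ∀ y : ℝ, HasDerivAt d.U (d.U1 y) y
  U_deriv2 : ∀ y : ℝ, HasDerivAt d.U1 (d.U2 y) y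
  U_deriv3 : ∀ y : ℝ, HasDerivAt d.U2 (d.U3 y) y
  U3_cont : Continuous d.U3
  U1_pos : ∀ y : ℝ, 0 < d.U1 y
  U2_neg : ∀ y : ℝ, d.U2 y < 0
  wt_cont : ContinuousOn (fun p : ℝ × ℝ × ℝ => d.wt p.1 p.2.1 p.2.2)
    (Icc 0 d.T ×ˢ Icc d.K⁻¹ d.K ×ˢ Icc d.yl d.yu)
  wh_cont : ContinuousOn (fun p : ℝ × ℝ × ℝ => d.wh p.1 p.2.1 p.2.2)
    (Icc 0 d.T ×ˢ Icc d.K⁻¹ d.K ×ˢ Icc d.yl d.yu)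
  wt_deriv : ∀ t ∈ Ioo (0:ℝ) d.T, ∀ s ∈ Ioo d.K⁻¹ d.K, ∀ y ∈ Ioo d.yl d.yu,
    HasDerivAt (fun t' => d.wt t' s y) (d.wtT t s y) t ∧
    HasDerivAt (fun s' => d.wt t s' y) (d.wtS t s y) s ∧
    HasDerivAt (fun y' => d.wt t s y') (d.wtY t s y) y ∧
    HasDerivAt (fun s' => d.wtS t s' y) (d.wtSS t s y) s ∧
    HasDerivAt (fun y' => d.wtS t s y') (d.wtSY t s y) y ∧
    HasDerivAt (fun y' => d.wtY t s y') (d.wtYY t s y) y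
  wh_deriv : ∀ t ∈ Ioo (0:ℝ) d.T, ∀ s ∈ Ioo d.K⁻¹ d.K, ∀ y ∈ Ioo d.yl d.yu,
    HasDerivAt (fun t' => d.wh t' s y) (d.whT t s y) t ∧
    HasDerivAt (fun s' => d.wh t s' y) (d.whS t s y) s ∧
    HasDerivAt (fun y' => d.wh t s y') (d.whY t s y) y ∧
    HasDerivAt (fun s' => d.whS t s' y) (d.whSS t s y) s ∧
    HasDerivAt (fun y' => d.whS t s y') (d.whSY t s y) y ∧
    HasDerivAt (fun y' => d.whY t s y') (d.whYY t s y) y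
  wt_deriv_cont : ∀ g ∈ [d.wtT, d.wtS, d.wtY, d.wtSS, d.wtSY, d.wtYY],
    ContinuousOn (fun p : ℝ × ℝ × ℝ => g p.1 p.2.1 p.2.2)
      (Ioo 0 d.T ×ˢ Ioo d.K⁻¹ d.K ×ˢ Ioo d.yl d.yu)
  wh_deriv_cont : ∀ g ∈ [d.whT, d.whS, d.whY, d.whSS, d.whSY, d.whYY],
    ContinuousOn (fun p : ℝ × ℝ × ℝ => g p.1 p.2.1 p.2.2)
      (Ioo 0 d.T ×ˢ Ioo d.K⁻¹ d.K ×ˢ Ioo d.yl d.yu)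
  wt_bdd : ∀ g ∈ [d.wtT, d.wtS, d.wtY, d.wtSS, d.wtSY, d.wtYY],
    ∀ t ∈ Ioo (0:ℝ) d.T, ∀ s ∈ Ioo d.K⁻¹ d.K, ∀ y ∈ Ioo d.yl d.yu, |g t s y| ≤ d.K
  wh_bdd : ∀ g ∈ [d.whT, d.whS, d.whY, d.whSS, d.whSY, d.whYY],
    ∀ t ∈ Ioo (0:ℝ) d.T, ∀ s ∈ Ioo d.K⁻¹ d.K, ∀ y ∈ Ioo d.yl d.yu, |g t s y| ≤ d.K

/-- The PDEs (with source terms `g̃` and `ĝ`) and terminal/boundary conditions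
satisfied by the correction terms `w̃` and `ŵ`. -/
structure HedgeData.PDEAssumptions (d : HedgeData) : Prop where
  pde_wt : ∀ t ∈ Ioo (0:ℝ) d.T, ∀ s ∈ Ioo d.K⁻¹ d.K, ∀ y ∈ Ioo d.yl d.yu,
    d.wtT t s y + 1 / 2 * (d.sb t s) ^ 2 * s ^ 2 * d.wtSS t s y
      + (d.sb t s * s ^ 2 * d.Vss t s) ^ 2 / (2 * d.f2 t s y (d.sb t s)) = 0
  pde_wh : ∀ t ∈ Ioo (0:ℝ) d.T, ∀ s ∈ Ioo d.K⁻¹ d.K, ∀ y ∈ Ioo d.yl d.yu,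
    d.whT t s y + 1 / 2 * (d.sb t s) ^ 2 * s ^ 2 * d.whSS t s y
      + (1 / 6 * d.sigmaTilde t s y ^ 3 * d.f3 t s y (d.sb t s)
        - 1 / 2 * d.sigmaTilde t s y ^ 2 * s ^ 2 * d.Vss t s
        + d.sigmaTilde t s y * d.sb t s * s ^ 2
            * (d.Vss t s * d.wtY t s y - d.wtSS t s y)
        - d.U2 y / d.U1 y * (1 / 2 * (d.sb t s) ^ 2 * s ^ 2 * d.thetaTilde t s y ^ 2
            - d.sigmaTilde t s y ^ 2 * d.f2 t s y (d.sb t s) * d.wt t s y)) = 0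
  bc_T : ∀ s ∈ Ioo d.K⁻¹ d.K, ∀ y ∈ Ioo d.yl d.yu, d.wt d.T s y = 0 ∧ d.wh d.T s y = 0
  bc_S : ∀ t ∈ Ioo (0:ℝ) d.T, ∀ y ∈ Ioo d.yl d.yu,
    d.wt t d.K⁻¹ y = 0 ∧ d.wt t d.K y = 0 ∧ d.wh t d.K⁻¹ y = 0 ∧ d.wh t d.K y = 0

/-!
Every constituent of `w^ψ_t + H^ψ` has a second-order expansion in `ψ` with bounded coefficients,
uniformly in `(t, s, y)`, and such expansions can be added and multiplied. The factor `1 / ψ` in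
front of the penalty is harmless because `σ̄` is a critical zero of `f`, so that
`f(σ̄ + σ̃ ψ)` is of order `ψ²`; this is where the fourth derivative of `f` enters.

The coefficient of `1` in `w^ψ_t + H^ψ` vanishes, and those of `ψ` and `ψ²` are `-U'` and `U'`
times the left-hand sides of the equations for `w̃` and `ŵ`. The choice of `σ̃` enters through
`f''(σ̄) σ̃ = σ̄ s² V̄_ss`, and the choice of `θ̃` through `U'' θ̃ = U'' w̃_s + U' w̃_sy`, which
completes a square in the terms of order `ψ²`.
-/

open Filter Asymptotics Topology
open scoped Nat

section Bounded

variable {ι : Type*} {l : Filter ι}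

lemma isBigO_one_of_norm_le {E : Type*} [SeminormedAddCommGroup E] {f : ι → E} {C : ℝ}
    (h : ∀ᶠ i in l, ‖f i‖ ≤ C) : f =O[l] (1 : ι → ℝ) :=
  .of_bound C (by simpa using h)

lemma isBigO_one_of_continuousOn_isCompact {X E : Type*} [TopologicalSpace X]
    [SeminormedAddCommGroup E] {f : X → E} {K : Set X} (hf : ContinuousOn f K) (hK : IsCompact K)
    {u : ι → X} (hu : ∀ᶠ i in l, u i ∈ K) : (fun i => f (u i)) =O[l] (1 : ι → ℝ) :=
  have ⟨_, hC⟩ := hK.exists_bound_of_continuousOn hf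
  isBigO_one_of_norm_le (hu.mono fun _ hi => hC _ hi)

lemma isBigO_one_mul {R 𝕜 : Type*} [SeminormedRing R] [NormedField 𝕜] {f g : ι → R}
    (hf : f =O[l] (1 : ι → 𝕜)) (hg : g =O[l] (1 : ι → 𝕜)) : (f * g) =O[l] (1 : ι → 𝕜) :=
  (hf.mul hg).congr_right fun _ => mul_one _

lemma exists_pos_forall_Ioo_norm_le_of_isBigO {α E F : Type*} [SeminormedAddCommGroup E]
    [SeminormedAddCommGroup F] {f : ℝ × α → E} {g : ℝ → F} {D : Set α}
    (h : f =O[𝓝[>] 0 ×ˢ 𝓟 D] fun q => g q.1) :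
    ∃ C > 0, ∃ x₀ > 0, ∀ p ∈ D, ∀ x ∈ Ioo 0 x₀, ‖f (x, p)‖ ≤ C * ‖g x‖ := by
  obtain ⟨C, hC, hbound⟩ := h.exists_pos
  obtain ⟨x₀, hx₀, hsub⟩ := mem_nhdsGT_iff_exists_Ioo_subset.1
    (eventually_prod_principal_iff.1 hbound.bound)
  exact ⟨C, hC, x₀, hx₀, fun p hp x hx => hsub hx p hp⟩

end Bounded

section QuadExpansion

variable {ι 𝕜 : Type*} [NormedField 𝕜] {l : Filter ι}

/-- The second-order expansion `F = c₀ + c₁ x + c₂ x² + O(x³)` along the filter `l`, in a small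
parameter `x` and with coefficients that are bounded along `l`. Uniformity in further variables is
encoded by the filter, as in `𝓝[>] 0 ×ˢ 𝓟 D`. -/
structure HasQuadExpansion (l : Filter ι) (x F c₀ c₁ c₂ : ι → 𝕜) : Prop where
  bdd₀ : c₀ =O[l] (1 : ι → 𝕜)
  bdd₁ : c₁ =O[l] (1 : ι → 𝕜)
  bdd₂ : c₂ =O[l] (1 : ι → 𝕜)
  remainder : (F - (c₀ + c₁ * x + c₂ * x ^ 2)) =O[l] (x ^ 3)

namespace HasQuadExpansion

variable {x F G c₀ c₁ c₂ e₀ e₁ e₂ : ι → 𝕜}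

lemma of_quadratic (h₀ : c₀ =O[l] (1 : ι → 𝕜)) (h₁ : c₁ =O[l] (1 : ι → 𝕜))
    (h₂ : c₂ =O[l] (1 : ι → 𝕜)) :
    HasQuadExpansion l x (c₀ + c₁ * x + c₂ * x ^ 2) c₀ c₁ c₂ :=
  ⟨h₀, h₁, h₂, by simpa using! isBigO_zero _ _⟩

lemma of_linear (h₀ : c₀ =O[l] (1 : ι → 𝕜)) (h₁ : c₁ =O[l] (1 : ι → 𝕜)) :
    HasQuadExpansion l x (c₀ + c₁ * x) c₀ c₁ 0 := by
  simpa using of_quadratic (x := x) h₀ h₁ (c₂ := 0) (isBigO_zero _ _)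

lemma of_bounded (h : F =O[l] (1 : ι → 𝕜)) : HasQuadExpansion l x F F 0 0 := by
  simpa using of_linear (x := x) h (c₁ := 0) (isBigO_zero _ _)

lemma congr' (h : HasQuadExpansion l x F c₀ c₁ c₂) (hF : F =ᶠ[l] G) (h₀ : c₀ =ᶠ[l] e₀)
    (h₁ : c₁ =ᶠ[l] e₁) (h₂ : c₂ =ᶠ[l] e₂) : HasQuadExpansion l x G e₀ e₁ e₂ where
  bdd₀ := h.bdd₀.congr' h₀ .rfl
  bdd₁ := h.bdd₁.congr' h₁ .rfl
  bdd₂ := h.bdd₂.congr' h₂ .rfl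
  remainder := h.remainder.congr'
    (hF.sub ((h₀.add (h₁.mul .rfl)).add (h₂.mul .rfl))) .rfl

lemma add (hF : HasQuadExpansion l x F c₀ c₁ c₂) (hG : HasQuadExpansion l x G e₀ e₁ e₂) :
    HasQuadExpansion l x (F + G) (c₀ + e₀) (c₁ + e₁) (c₂ + e₂) where
  bdd₀ := hF.bdd₀.add hG.bdd₀
  bdd₁ := hF.bdd₁.add hG.bdd₁
  bdd₂ := hF.bdd₂.add hG.bdd₂
  remainder := (hF.remainder.add hG.remainder).congr_left fun i => by
    simp only [Pi.add_apply, Pi.sub_apply, Pi.mul_apply, Pi.pow_apply]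
    ring

lemma sub (hF : HasQuadExpansion l x F c₀ c₁ c₂) (hG : HasQuadExpansion l x G e₀ e₁ e₂) :
    HasQuadExpansion l x (F - G) (c₀ - e₀) (c₁ - e₁) (c₂ - e₂) where
  bdd₀ := hF.bdd₀.sub hG.bdd₀
  bdd₁ := hF.bdd₁.sub hG.bdd₁
  bdd₂ := hF.bdd₂.sub hG.bdd₂
  remainder := (hF.remainder.sub hG.remainder).congr_left fun i => by
    simp only [Pi.add_apply, Pi.sub_apply, Pi.mul_apply, Pi.pow_apply]
    ring

lemma isBigO_one (hF : HasQuadExpansion l x F c₀ c₁ c₂) (hx : x =O[l] (1 : ι → 𝕜)) :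
    F =O[l] (1 : ι → 𝕜) := by
  have hx2 : (x ^ 2) =O[l] (1 : ι → 𝕜) := sq x ▸ isBigO_one_mul hx hx
  have hx3 : (x ^ 3) =O[l] (1 : ι → 𝕜) := pow_succ x 2 ▸ isBigO_one_mul hx2 hx
  have hquad : (c₀ + c₁ * x + c₂ * x ^ 2) =O[l] (1 : ι → 𝕜) :=
    (hF.bdd₀.add (isBigO_one_mul hF.bdd₁ hx)).add (isBigO_one_mul hF.bdd₂ hx2)
  simpa using! (hF.remainder.trans hx3).add hquad

lemma mul (hF : HasQuadExpansion l x F c₀ c₁ c₂) (hG : HasQuadExpansion l x G e₀ e₁ e₂)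
    (hx : x =O[l] (1 : ι → 𝕜)) :
    HasQuadExpansion l x (F * G) (c₀ * e₀) (c₀ * e₁ + c₁ * e₀)
      (c₀ * e₂ + c₁ * e₁ + c₂ * e₀) := by
  have mul_cube {u v : ι → 𝕜} (hu : u =O[l] (1 : ι → 𝕜)) (hv : v =O[l] (x ^ 3)) :
      (u * v) =O[l] (x ^ 3) := by
    simpa using! hu.mul hv
  have hP : (c₀ + c₁ * x + c₂ * x ^ 2) =O[l] (1 : ι → 𝕜) :=
    (of_quadratic hF.bdd₀ hF.bdd₁ hF.bdd₂).isBigO_one hx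
  have htail : (c₁ * e₂ + c₂ * e₁ + c₂ * e₂ * x) =O[l] (1 : ι → 𝕜) :=
    ((isBigO_one_mul hF.bdd₁ hG.bdd₂).add (isBigO_one_mul hF.bdd₂ hG.bdd₁)).add
      (isBigO_one_mul (isBigO_one_mul hF.bdd₂ hG.bdd₂) hx)
  refine ⟨isBigO_one_mul hF.bdd₀ hG.bdd₀,
    (isBigO_one_mul hF.bdd₀ hG.bdd₁).add (isBigO_one_mul hF.bdd₁ hG.bdd₀),
    ((isBigO_one_mul hF.bdd₀ hG.bdd₂).add (isBigO_one_mul hF.bdd₁ hG.bdd₁)).add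
      (isBigO_one_mul hF.bdd₂ hG.bdd₀), ?_⟩
  refine (((mul_cube (hG.isBigO_one hx) hF.remainder).add (mul_cube hP hG.remainder)).add
    (mul_cube htail (isBigO_refl _ _))).congr_left fun i => ?_
  simp only [Pi.add_apply, Pi.sub_apply, Pi.mul_apply, Pi.pow_apply]
  ring

lemma isBigO_cube (hF : HasQuadExpansion l x F c₀ c₁ c₂) (h₀ : c₀ =ᶠ[l] 0) (h₁ : c₁ =ᶠ[l] 0)
    (h₂ : c₂ =ᶠ[l] 0) : F =O[l] (x ^ 3) := by
  simpa using (hF.congr' .rfl h₀ h₁ h₂).remainder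

end HasQuadExpansion

end QuadExpansion

section Taylor

lemma contDiff_succ_of_hasDerivAt {𝕜 E : Type*} [NontriviallyNormedField 𝕜]
    [NormedAddCommGroup E] [NormedSpace 𝕜 E] {f f' : 𝕜 → E} {n : ℕ}
    (hf : ∀ x, HasDerivAt f (f' x) x) (hf' : ContDiff 𝕜 n f') : ContDiff 𝕜 (n + 1) f :=
  contDiff_succ_iff_deriv.2 ⟨fun x => (hf x).differentiableAt, by simp, deriv_eq hf ▸ hf'⟩

lemma abs_sub_taylor_le {f : ℝ → ℝ} {n : ℕ} {a x C : ℝ} (hf : ContDiff ℝ (n + 1) f)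
    (hC : ∀ z ∈ uIcc a x, |iteratedDeriv (n + 1) f z| ≤ C) :
    |f x - ∑ k ∈ Finset.range (n + 1), iteratedDeriv k f a / k ! * (x - a) ^ k| ≤
      C * |x - a| ^ (n + 1) := by
  obtain rfl | hne := eq_or_ne a x
  · simp [Finset.sum_range_succ']
  have htaylor : taylorWithinEval f n (uIcc a x) a x =
      ∑ k ∈ Finset.range (n + 1), iteratedDeriv k f a / k ! * (x - a) ^ k := by
    rw [taylor_within_apply]
    refine Finset.sum_congr rfl fun k hk => ?_
    have hkn : (k : WithTop ℕ∞) ≤ n + 1 := by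
      exact_mod_cast (Finset.mem_range.1 hk).le
    rw [iteratedDerivWithin_eq_iteratedDeriv (uniqueDiffOn_uIcc hne) (hf.of_le hkn).contDiffAt
      left_mem_uIcc, smul_eq_mul]
    ring
  obtain ⟨z, hz, hrem⟩ := taylor_mean_remainder_lagrange_iteratedDeriv hne hf.contDiffOn
  have hfact : (1 : ℝ) ≤ (n + 1)! := by exact_mod_cast (n + 1).factorial_pos
  have hCz := hC z (uIoo_subset_uIcc_self hz)
  rw [← htaylor, hrem, abs_div, abs_mul, abs_pow, Nat.abs_cast]
  exact (div_le_self (by positivity) hfact).trans (by gcongr)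

variable {ι : Type*} {l : Filter ι} {f : ι → ℝ → ℝ} {a : ι → ℝ}

lemma isBigO_sub_taylor {h : ι → ℝ} {n : ℕ} {ε C : ℝ} (hε : 0 < ε)
    (hf : ∀ᶠ i in l, ContDiff ℝ (n + 1) (f i))
    (hC : ∀ᶠ i in l, ∀ z, |z - a i| ≤ ε → |iteratedDeriv (n + 1) (f i) z| ≤ C)
    (hh : Tendsto h l (𝓝 0)) :
    (fun i => f i (a i + h i) -
      ∑ k ∈ Finset.range (n + 1), iteratedDeriv k (f i) (a i) / k ! * h i ^ k) =O[l]
      (h ^ (n + 1)) := by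
  have hsmall : ∀ᶠ i in l, |h i| ≤ ε := by
    simpa using hh.abs.eventually_le_const (by simpa using hε)
  refine .of_bound C ?_
  filter_upwards [hf, hC, hsmall] with i hfi hCi hhi
  have hbound : ∀ z ∈ uIcc (a i) (a i + h i), |iteratedDeriv (n + 1) (f i) z| ≤ C :=
    fun z hz => hCi z ((abs_sub_left_of_mem_uIcc hz).trans (by simpa using hhi))
  simpa using abs_sub_taylor_le hfi hbound

lemma hasQuadExpansion_inv_mul_of_critical {x c : ι → ℝ} {ε C : ℝ} (hε : 0 < ε)
    (hx : Tendsto x l (𝓝[≠] 0)) (hc : c =O[l] (1 : ι → ℝ))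
    (hf : ∀ᶠ i in l, ContDiff ℝ 4 (f i)) (hf0 : ∀ᶠ i in l, f i (a i) = 0)
    (hf1 : ∀ᶠ i in l, deriv (f i) (a i) = 0)
    (hf2 : (fun i => iteratedDeriv 2 (f i) (a i)) =O[l] (1 : ι → ℝ))
    (hf3 : (fun i => iteratedDeriv 3 (f i) (a i)) =O[l] (1 : ι → ℝ))
    (hf4 : ∀ᶠ i in l, ∀ z, |z - a i| ≤ ε → |iteratedDeriv 4 (f i) z| ≤ C) :
    HasQuadExpansion l x (fun i => 1 / x i * f i (a i + c i * x i)) 0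
      (fun i => 1 / 2 * (iteratedDeriv 2 (f i) (a i) * c i ^ 2))
      (fun i => 1 / 6 * (iteratedDeriv 3 (f i) (a i) * c i ^ 3)) := by
  have hc2 : (c ^ 2) =O[l] (1 : ι → ℝ) := sq c ▸ isBigO_one_mul hc hc
  have hc3 : (c ^ 3) =O[l] (1 : ι → ℝ) := pow_succ c 2 ▸ isBigO_one_mul hc2 hc
  have hh : Tendsto (fun i => c i * x i) l (𝓝 0) := by
    have hx0 : x =o[l] (1 : ι → ℝ) := (isLittleO_one_iff ℝ).2 (hx.mono_right nhdsWithin_le_nhds)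
    exact (isLittleO_one_iff ℝ).1 (by simpa using! hc.mul_isLittleO hx0)
  have htaylor := isBigO_sub_taylor (n := 3) hε (by norm_num1; exact hf) hf4 hh
  have hh4 : ((fun i => c i * x i) ^ 4) =O[l] (x ^ 4) := by
    simpa using! (hc.mul (isBigO_refl x l)).pow 4
  refine ⟨isBigO_zero _ _, (isBigO_one_mul hf2 hc2).const_mul_left _,
    (isBigO_one_mul hf3 hc3).const_mul_left _, ?_⟩
  have hx0 : ∀ᶠ i in l, x i ≠ 0 := hx.eventually self_mem_nhdsWithin
  refine ((isBigO_refl (fun i => (x i)⁻¹) l).mul (htaylor.trans hh4)).congr' ?_ ?_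
  · filter_upwards [hx0, hf0, hf1] with i hxi h0 h1
    simp only [Nat.reduceAdd, Finset.sum_range_succ, Finset.range_one, Finset.sum_singleton,
      iteratedDeriv_zero, h0, Nat.factorial, Nat.cast_one, div_one, pow_zero, mul_one,
      iteratedDeriv_one, h1, Nat.succ_eq_add_one, zero_add, pow_one, zero_mul, add_zero,
      Nat.cast_ofNat, Nat.reduceMul, one_div, Pi.sub_apply, Pi.add_apply, Pi.mul_apply,
      Pi.pow_apply]
    field_simp
  · filter_upwards [hx0] with i hxi
    simp only [Pi.pow_apply]
    field_simp

end Taylor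

/-- At the point `(t, s, y)`, the functions `wT, wS, wY, wSS, wSY, wYY` are the partial
derivatives of `w` that their subscripts name. -/
def HasPartialsAt (w wT wS wY wSS wSY wYY : ℝ → ℝ → ℝ → ℝ) (t s y : ℝ) : Prop :=
  HasDerivAt (fun t' => w t' s y) (wT t s y) t ∧
  HasDerivAt (fun s' => w t s' y) (wS t s y) s ∧
  HasDerivAt (fun y' => w t s y') (wY t s y) y ∧
  HasDerivAt (fun s' => wS t s' y) (wSS t s y) s ∧
  HasDerivAt (fun y' => wS t s y') (wSY t s y) y ∧
  HasDerivAt (fun y' => wY t s y') (wYY t s y) y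

namespace HedgeData

/-- The functions listed in `HedgeData` as derivatives are the derivatives of `V̄`, `f`, `U`, `w̃`
and `ŵ` at `(t, s, y)`; those of the penalty `f` are taken at every volatility `ς`. -/
structure DerivativesAt (d : HedgeData) (t s y : ℝ) : Prop where
  V_s : HasDerivAt (d.V t) (d.Vs t s) s
  V_ss : HasDerivAt (d.Vs t) (d.Vss t s) s
  f_1 : ∀ ς, HasDerivAt (d.f t s y) (d.f1 t s y ς) ς
  f_2 : ∀ ς, HasDerivAt (d.f1 t s y) (d.f2 t s y ς) ς
  f_3 : ∀ ς, HasDerivAt (d.f2 t s y) (d.f3 t s y ς) ς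
  f_4 : ∀ ς, HasDerivAt (d.f3 t s y) (d.f4 t s y ς) ς
  f_4_cont : Continuous (d.f4 t s y)
  U_1 : HasDerivAt d.U (d.U1 y) y
  U_2 : HasDerivAt d.U1 (d.U2 y) y
  U_3 : HasDerivAt d.U2 (d.U3 y) y
  wt : HasPartialsAt d.wt d.wtT d.wtS d.wtY d.wtSS d.wtSY d.wtYY t s y
  wh : HasPartialsAt d.wh d.whT d.whS d.whY d.whSS d.whSY d.whYY t s y

/-- The reference volatility `σ̄` is a critical zero of the penalty at `(t, s, y)`, and the
quantities by which `σ̃`, `θ̃` and `ĝ` divide do not vanish there. -/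
structure NondegenerateAt (d : HedgeData) (t s y : ℝ) : Prop where
  f_sb : d.f t s y (d.sb t s) = 0
  f1_sb : d.f1 t s y (d.sb t s) = 0
  f2_ne : d.f2 t s y (d.sb t s) ≠ 0
  U1_ne : d.U1 y ≠ 0
  U2_ne : d.U2 y ≠ 0

/-- The source term `g̃` of the equation for `w̃`. -/
noncomputable def gTilde (d : HedgeData) (t s y : ℝ) : ℝ :=
  (d.sb t s * s ^ 2 * d.Vss t s) ^ 2 / (2 * d.f2 t s y (d.sb t s))

/-- The source term `ĝ` of the equation for `ŵ`. -/
noncomputable def gHat (d : HedgeData) (t s y : ℝ) : ℝ :=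
  1 / 6 * d.sigmaTilde t s y ^ 3 * d.f3 t s y (d.sb t s)
    - 1 / 2 * d.sigmaTilde t s y ^ 2 * s ^ 2 * d.Vss t s
    + d.sigmaTilde t s y * d.sb t s * s ^ 2 * (d.Vss t s * d.wtY t s y - d.wtSS t s y)
    - d.U2 y / d.U1 y * (1 / 2 * (d.sb t s) ^ 2 * s ^ 2 * d.thetaTilde t s y ^ 2
        - d.sigmaTilde t s y ^ 2 * d.f2 t s y (d.sb t s) * d.wt t s y)

/-- The corrector equations for `w̃` and `ŵ` hold at `(t, s, y)`. -/
structure CorrectorEquationsAt (d : HedgeData) (t s y : ℝ) : Prop where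
  wt : d.wtT t s y + 1 / 2 * (d.sb t s) ^ 2 * s ^ 2 * d.wtSS t s y + d.gTilde t s y = 0
  wh : d.whT t s y + 1 / 2 * (d.sb t s) ^ 2 * s ^ 2 * d.whSS t s y + d.gHat t s y = 0

/-- The data of the hedging problem stay bounded along the family of points `(t i, s i, y i)`.
The bound on `f⁽⁴⁾` is required uniformly at distance at most some `ε > 0` from `σ̄`. -/
structure BoundedAlong {ι : Type*} (d : HedgeData) (l : Filter ι) (t s y : ι → ℝ) : Prop where
  s_bdd : s =O[l] (1 : ι → ℝ)
  sb_bdd : (fun i => d.sb (t i) (s i)) =O[l] (1 : ι → ℝ)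
  Vss_bdd : (fun i => s i ^ 2 * d.Vss (t i) (s i)) =O[l] (1 : ι → ℝ)
  U_bdd : ∀ u ∈ [d.U1, d.U2, d.U3], (fun i => u (y i)) =O[l] (1 : ι → ℝ)
  U2_inv_bdd : (fun i => (d.U2 (y i))⁻¹) =O[l] (1 : ι → ℝ)
  f2_inv_bdd : (fun i => (d.f2 (t i) (s i) (y i) (d.sb (t i) (s i)))⁻¹) =O[l] (1 : ι → ℝ)
  f_bdd : ∀ g ∈ [d.f2, d.f3],
    (fun i => g (t i) (s i) (y i) (d.sb (t i) (s i))) =O[l] (1 : ι → ℝ)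
  f4_bdd : ∃ ε > 0, ∃ C, ∀ᶠ i in l, ∀ ς, |ς - d.sb (t i) (s i)| ≤ ε →
    |d.f4 (t i) (s i) (y i) ς| ≤ C
  w_bdd : ∀ w ∈ [d.wt, d.wtT, d.wtS, d.wtY, d.wtSS, d.wtSY, d.wtYY,
      d.wh, d.whT, d.whS, d.whY, d.whSS, d.whSY, d.whYY],
    (fun i => w (t i) (s i) (y i)) =O[l] (1 : ι → ℝ)

section Pointwise

variable {d : HedgeData} {t s y : ℝ}

lemma DerivativesAt.deriv_f (h : d.DerivativesAt t s y) : deriv (d.f t s y) = d.f1 t s y :=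
  funext fun ς => (h.f_1 ς).deriv

lemma DerivativesAt.iteratedDeriv_two_f (h : d.DerivativesAt t s y) :
    iteratedDeriv 2 (d.f t s y) = d.f2 t s y := by
  rw [iteratedDeriv_succ, iteratedDeriv_one, h.deriv_f]
  exact funext fun ς => (h.f_2 ς).deriv

lemma DerivativesAt.iteratedDeriv_three_f (h : d.DerivativesAt t s y) :
    iteratedDeriv 3 (d.f t s y) = d.f3 t s y := by
  rw [iteratedDeriv_succ, h.iteratedDeriv_two_f]
  exact funext fun ς => (h.f_3 ς).deriv

lemma DerivativesAt.iteratedDeriv_four_f (h : d.DerivativesAt t s y) :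
    iteratedDeriv 4 (d.f t s y) = d.f4 t s y := by
  rw [iteratedDeriv_succ, h.iteratedDeriv_three_f]
  exact funext fun ς => (h.f_4 ς).deriv

lemma DerivativesAt.contDiff_f (h : d.DerivativesAt t s y) : ContDiff ℝ 4 (d.f t s y) :=
  contDiff_succ_of_hasDerivAt (n := 3) h.f_1 <| contDiff_succ_of_hasDerivAt (n := 2) h.f_2 <|
    contDiff_succ_of_hasDerivAt (n := 1) h.f_3 <| contDiff_succ_of_hasDerivAt (n := 0) h.f_4 <|
      contDiff_zero.2 h.f_4_cont

lemma U2_mul_thetaTilde (hU2 : d.U2 y ≠ 0) :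
    d.U2 y * d.thetaTilde t s y = d.U2 y * d.wtS t s y + d.U1 y * d.wtSY t s y := by
  rw [thetaTilde]
  field_simp

lemma gTilde_eq (hf2 : d.f2 t s y (d.sb t s) ≠ 0) :
    d.gTilde t s y = 1 / 2 * (d.f2 t s y (d.sb t s) * d.sigmaTilde t s y ^ 2) := by
  rw [gTilde, sigmaTilde]
  field_simp

lemma f2_mul_sigmaTilde (hf2 : d.f2 t s y (d.sb t s) ≠ 0) :
    d.f2 t s y (d.sb t s) * d.sigmaTilde t s y = d.sb t s * (s ^ 2 * d.Vss t s) := by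
  rw [sigmaTilde]
  field_simp

lemma CorrectorEquationsAt.first_order_eq_zero (h : d.CorrectorEquationsAt t s y)
    (hf2 : d.f2 t s y (d.sb t s) ≠ 0) :
    -(d.U1 y * d.wtT t s y)
      + (d.U1 y * (1 / 2 * (d.f2 t s y (d.sb t s) * d.sigmaTilde t s y ^ 2))
        + -(s ^ 2 * d.Vss t s * d.sb t s * d.sigmaTilde t s y * d.U1 y)
        + -(1 / 2 * d.sb t s ^ 2 * s ^ 2 * (d.U1 y * d.wtSS t s y))) = 0 := by
  linear_combination -d.U1 y * h.wt + d.U1 y * gTilde_eq hf2 +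
    d.U1 y * d.sigmaTilde t s y * f2_mul_sigmaTilde hf2

lemma CorrectorEquationsAt.second_order_eq_zero (h : d.CorrectorEquationsAt t s y)
    (hf2 : d.f2 t s y (d.sb t s) ≠ 0) (hU1 : d.U1 y ≠ 0) :
    d.U1 y * d.whT t s y
      + (d.U1 y * (1 / 6 * (d.f3 t s y (d.sb t s) * d.sigmaTilde t s y ^ 3))
        + s ^ 2 * d.Vss t s * (d.sb t s * d.sigmaTilde t s y
            * (d.U2 y * d.wt t s y + d.U1 y * d.wtY t s y)
          - 1 / 2 * d.sigmaTilde t s y ^ 2 * d.U1 y)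
        + (1 / 2 * d.sb t s ^ 2 * s ^ 2
            * (d.U1 y * d.whSS t s y - d.U2 y * d.thetaTilde t s y ^ 2)
          - d.sb t s * d.sigmaTilde t s y * s ^ 2 * (d.U1 y * d.wtSS t s y))) = 0 := by
  have hgHat : d.U1 y * d.gHat t s y =
      d.U1 y * (1 / 6 * d.sigmaTilde t s y ^ 3 * d.f3 t s y (d.sb t s)
        - 1 / 2 * d.sigmaTilde t s y ^ 2 * s ^ 2 * d.Vss t s
        + d.sigmaTilde t s y * d.sb t s * s ^ 2 * (d.Vss t s * d.wtY t s y - d.wtSS t s y))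
      - d.U2 y * (1 / 2 * (d.sb t s) ^ 2 * s ^ 2 * d.thetaTilde t s y ^ 2
        - d.sigmaTilde t s y ^ 2 * d.f2 t s y (d.sb t s) * d.wt t s y) := by
    rw [gHat]
    field_simp
  linear_combination d.U1 y * h.wh - hgHat -
    d.U2 y * d.wt t s y * d.sigmaTilde t s y * f2_mul_sigmaTilde hf2

end Pointwise

section Along

variable {ι : Type*} {d : HedgeData} {l : Filter ι} {ψ t s y : ι → ℝ}

lemma BoundedAlong.isBigO_sigmaTilde (h : d.BoundedAlong l t s y) :
    (fun i => d.sigmaTilde (t i) (s i) (y i)) =O[l] (1 : ι → ℝ) :=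
  (isBigO_one_mul (isBigO_one_mul h.sb_bdd h.Vss_bdd) h.f2_inv_bdd).congr_left fun i => by
    simp only [Pi.mul_apply, sigmaTilde]
    ring

lemma BoundedAlong.isBigO_thetaTilde (h : d.BoundedAlong l t s y) :
    (fun i => d.thetaTilde (t i) (s i) (y i)) =O[l] (1 : ι → ℝ) :=
  (h.w_bdd d.wtS (by simp)).add <| isBigO_one_mul
    (isBigO_one_mul (h.U_bdd d.U1 (by simp)) h.U2_inv_bdd) (h.w_bdd d.wtSY (by simp))

lemma BoundedAlong.hasQuadExpansion_sigmaPsi (h : d.BoundedAlong l t s y) :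
    HasQuadExpansion l ψ (fun i => d.sigmaPsi (ψ i) (t i) (s i) (y i))
      (fun i => d.sb (t i) (s i)) (fun i => d.sigmaTilde (t i) (s i) (y i)) 0 :=
  .of_linear h.sb_bdd h.isBigO_sigmaTilde

lemma BoundedAlong.hasQuadExpansion_wPsiT (h : d.BoundedAlong l t s y) :
    HasQuadExpansion l ψ (fun i => d.wPsiT (ψ i) (t i) (s i) (y i))
      0
      (fun i => -(d.U1 (y i) * d.wtT (t i) (s i) (y i)))
      (fun i => d.U1 (y i) * d.whT (t i) (s i) (y i)) := by
  have hU1 := h.U_bdd d.U1 (by simp)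
  refine (HasQuadExpansion.of_quadratic (isBigO_zero _ _)
    (isBigO_one_mul hU1 (h.w_bdd d.wtT (by simp))).neg_left
    (isBigO_one_mul hU1 (h.w_bdd d.whT (by simp)))).congr'
    (.of_forall fun i => ?_) .rfl .rfl .rfl
  simp [wPsiT]

lemma BoundedAlong.hasQuadExpansion_wPsiY (h : d.BoundedAlong l t s y) :
    HasQuadExpansion l ψ (fun i => d.wPsiY (ψ i) (t i) (s i) (y i))
      (fun i => d.U1 (y i))
      (fun i => -(d.U2 (y i) * d.wt (t i) (s i) (y i) + d.U1 (y i) * d.wtY (t i) (s i) (y i)))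
      (fun i => d.U2 (y i) * d.wh (t i) (s i) (y i) + d.U1 (y i) * d.whY (t i) (s i) (y i)) := by
  have hU1 := h.U_bdd d.U1 (by simp)
  have hU2 := h.U_bdd d.U2 (by simp)
  refine (HasQuadExpansion.of_quadratic hU1
    ((isBigO_one_mul hU2 (h.w_bdd d.wt (by simp))).add
      (isBigO_one_mul hU1 (h.w_bdd d.wtY (by simp)))).neg_left
    ((isBigO_one_mul hU2 (h.w_bdd d.wh (by simp))).add
      (isBigO_one_mul hU1 (h.w_bdd d.whY (by simp))))).congr'
    (.of_forall fun i => ?_) .rfl .rfl .rfl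
  simp only [Pi.add_apply, Pi.mul_apply, Pi.pow_apply, wPsiY]
  ring

lemma BoundedAlong.hasQuadExpansion_wPsiSS (h : d.BoundedAlong l t s y) :
    HasQuadExpansion l ψ (fun i => d.wPsiSS (ψ i) (t i) (s i) (y i))
      0
      (fun i => -(d.U1 (y i) * d.wtSS (t i) (s i) (y i)))
      (fun i => d.U1 (y i) * d.whSS (t i) (s i) (y i)) := by
  have hU1 := h.U_bdd d.U1 (by simp)
  refine (HasQuadExpansion.of_quadratic (isBigO_zero _ _)
    (isBigO_one_mul hU1 (h.w_bdd d.wtSS (by simp))).neg_left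
    (isBigO_one_mul hU1 (h.w_bdd d.whSS (by simp)))).congr'
    (.of_forall fun i => ?_) .rfl .rfl .rfl
  simp [wPsiSS]

lemma BoundedAlong.hasQuadExpansion_wPsiSY (h : d.BoundedAlong l t s y) :
    HasQuadExpansion l ψ (fun i => d.wPsiSY (ψ i) (t i) (s i) (y i))
      0
      (fun i => -(d.U2 (y i) * d.wtS (t i) (s i) (y i) + d.U1 (y i) * d.wtSY (t i) (s i) (y i)))
      (fun i => d.U2 (y i) * d.whS (t i) (s i) (y i) + d.U1 (y i) * d.whSY (t i) (s i) (y i)) := by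
  have hU1 := h.U_bdd d.U1 (by simp)
  have hU2 := h.U_bdd d.U2 (by simp)
  refine (HasQuadExpansion.of_quadratic (isBigO_zero _ _)
    ((isBigO_one_mul hU2 (h.w_bdd d.wtS (by simp))).add
      (isBigO_one_mul hU1 (h.w_bdd d.wtSY (by simp)))).neg_left
    ((isBigO_one_mul hU2 (h.w_bdd d.whS (by simp))).add
      (isBigO_one_mul hU1 (h.w_bdd d.whSY (by simp))))).congr'
    (.of_forall fun i => ?_) .rfl .rfl .rfl
  simp [wPsiSY]

lemma BoundedAlong.hasQuadExpansion_wPsiYY (h : d.BoundedAlong l t s y) :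
    HasQuadExpansion l ψ (fun i => d.wPsiYY (ψ i) (t i) (s i) (y i))
      (fun i => d.U2 (y i))
      (fun i => -(d.U3 (y i) * d.wt (t i) (s i) (y i)
        + 2 * d.U2 (y i) * d.wtY (t i) (s i) (y i) + d.U1 (y i) * d.wtYY (t i) (s i) (y i)))
      (fun i => d.U3 (y i) * d.wh (t i) (s i) (y i)
        + 2 * d.U2 (y i) * d.whY (t i) (s i) (y i)
        + d.U1 (y i) * d.whYY (t i) (s i) (y i)) := by
  have hU1 := h.U_bdd d.U1 (by simp)
  have hU2 := h.U_bdd d.U2 (by simp)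
  have hU3 := h.U_bdd d.U3 (by simp)
  have hU2' := hU2.const_mul_left 2
  refine (HasQuadExpansion.of_quadratic hU2
    (((isBigO_one_mul hU3 (h.w_bdd d.wt (by simp))).add
      (isBigO_one_mul hU2' (h.w_bdd d.wtY (by simp)))).add
      (isBigO_one_mul hU1 (h.w_bdd d.wtYY (by simp)))).neg_left
    (((isBigO_one_mul hU3 (h.w_bdd d.wh (by simp))).add
      (isBigO_one_mul hU2' (h.w_bdd d.whY (by simp)))).add
      (isBigO_one_mul hU1 (h.w_bdd d.whYY (by simp))))).congr'
    (.of_forall fun i => ?_) .rfl .rfl .rfl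
  simp only [Pi.add_apply, Pi.mul_apply, Pi.pow_apply, wPsiYY]
  ring

lemma hasQuadExpansion_penalty (hψ : Tendsto ψ l (𝓝[≠] 0))
    (hder : ∀ᶠ i in l, d.DerivativesAt (t i) (s i) (y i))
    (hnd : ∀ᶠ i in l, d.NondegenerateAt (t i) (s i) (y i)) (hbdd : d.BoundedAlong l t s y) :
    HasQuadExpansion l ψ
      (fun i => 1 / ψ i * d.U1 (y i) *
        d.f (t i) (s i) (y i) (d.sigmaPsi (ψ i) (t i) (s i) (y i)))
      0
      (fun i => d.U1 (y i) * (1 / 2 * (d.f2 (t i) (s i) (y i) (d.sb (t i) (s i))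
        * d.sigmaTilde (t i) (s i) (y i) ^ 2)))
      (fun i => d.U1 (y i) * (1 / 6 * (d.f3 (t i) (s i) (y i) (d.sb (t i) (s i))
        * d.sigmaTilde (t i) (s i) (y i) ^ 3))) := by
  have hψ₁ : ψ =O[l] (1 : ι → ℝ) := (hψ.mono_right nhdsWithin_le_nhds).isBigO_one ℝ
  have hf2 : ∀ᶠ i in l, d.f2 (t i) (s i) (y i) (d.sb (t i) (s i)) =
      iteratedDeriv 2 (d.f (t i) (s i) (y i)) (d.sb (t i) (s i)) :=
    hder.mono fun i hi => by rw [hi.iteratedDeriv_two_f]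
  have hf3 : ∀ᶠ i in l, d.f3 (t i) (s i) (y i) (d.sb (t i) (s i)) =
      iteratedDeriv 3 (d.f (t i) (s i) (y i)) (d.sb (t i) (s i)) :=
    hder.mono fun i hi => by rw [hi.iteratedDeriv_three_f]
  obtain ⟨ε, hε, C, hf4⟩ := hbdd.f4_bdd
  have hpenalty : HasQuadExpansion l ψ
      (fun i => 1 / ψ i * d.f (t i) (s i) (y i) (d.sigmaPsi (ψ i) (t i) (s i) (y i))) 0 _ _ :=
    hasQuadExpansion_inv_mul_of_critical hε hψ hbdd.isBigO_sigmaTilde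
      (hder.mono fun _ hi => hi.contDiff_f) (hnd.mono fun _ hi => hi.f_sb)
      (by filter_upwards [hder, hnd] with i hi hi'; rw [hi.deriv_f, hi'.f1_sb])
      ((hbdd.f_bdd d.f2 (by simp)).congr' hf2 .rfl) ((hbdd.f_bdd d.f3 (by simp)).congr' hf3 .rfl)
      (by filter_upwards [hder, hf4] with i hi hi'; rwa [hi.iteratedDeriv_four_f])
  refine ((HasQuadExpansion.of_bounded (hbdd.U_bdd d.U1 (by simp))).mul hpenalty hψ₁).congr'
    (.of_forall fun i => ?_) (.of_forall fun i => ?_) ?_ ?_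
  · simp only [Pi.mul_apply]
    ring
  · simp
  · filter_upwards [hf2] with i hi
    simp [hi]
  · filter_upwards [hf3] with i hi
    simp [hi]

lemma BoundedAlong.hasQuadExpansion_mismatch (h : d.BoundedAlong l t s y)
    (hψ : ψ =O[l] (1 : ι → ℝ)) :
    HasQuadExpansion l ψ
      (fun i => 1 / 2 * s i ^ 2 * d.Vss (t i) (s i) *
        (d.sb (t i) (s i) ^ 2 - d.sigmaPsi (ψ i) (t i) (s i) (y i) ^ 2) *
        d.wPsiY (ψ i) (t i) (s i) (y i))
      0
      (fun i => -(s i ^ 2 * d.Vss (t i) (s i) * d.sb (t i) (s i)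
        * d.sigmaTilde (t i) (s i) (y i) * d.U1 (y i)))
      (fun i => s i ^ 2 * d.Vss (t i) (s i) *
        (d.sb (t i) (s i) * d.sigmaTilde (t i) (s i) (y i)
            * (d.U2 (y i) * d.wt (t i) (s i) (y i) + d.U1 (y i) * d.wtY (t i) (s i) (y i))
          - 1 / 2 * d.sigmaTilde (t i) (s i) (y i) ^ 2 * d.U1 (y i))) := by
  have hσsq := h.hasQuadExpansion_sigmaPsi.mul h.hasQuadExpansion_sigmaPsi hψ
  have hVss := HasQuadExpansion.of_bounded (x := ψ) (h.Vss_bdd.const_mul_left (1 / 2))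
  have hsbsq := HasQuadExpansion.of_bounded (x := ψ) (isBigO_one_mul h.sb_bdd h.sb_bdd)
  refine ((hVss.mul (hsbsq.sub hσsq) hψ).mul h.hasQuadExpansion_wPsiY hψ).congr'
    (.of_forall fun i => ?_) (.of_forall fun i => ?_) (.of_forall fun i => ?_)
    (.of_forall fun i => ?_) <;>
  · simp only [Pi.add_apply, Pi.sub_apply, Pi.mul_apply, Pi.zero_apply]
    ring

lemma BoundedAlong.hasQuadExpansion_diffusion (h : d.BoundedAlong l t s y)
    (hψ : ψ =O[l] (1 : ι → ℝ)) (hU2 : ∀ᶠ i in l, d.U2 (y i) ≠ 0) :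
    HasQuadExpansion l ψ
      (fun i => 1 / 2 * d.sigmaPsi (ψ i) (t i) (s i) (y i) ^ 2 * s i ^ 2 *
        (d.wPsiSS (ψ i) (t i) (s i) (y i)
          + 2 * (d.thetaPsi (ψ i) (t i) (s i) (y i) - d.Vs (t i) (s i))
            * d.wPsiSY (ψ i) (t i) (s i) (y i)
          + (d.thetaPsi (ψ i) (t i) (s i) (y i) - d.Vs (t i) (s i)) ^ 2
            * d.wPsiYY (ψ i) (t i) (s i) (y i)))
      0
      (fun i => -(1 / 2 * d.sb (t i) (s i) ^ 2 * s i ^ 2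
        * (d.U1 (y i) * d.wtSS (t i) (s i) (y i))))
      (fun i => 1 / 2 * d.sb (t i) (s i) ^ 2 * s i ^ 2
          * (d.U1 (y i) * d.whSS (t i) (s i) (y i)
            - d.U2 (y i) * d.thetaTilde (t i) (s i) (y i) ^ 2)
        - d.sb (t i) (s i) * d.sigmaTilde (t i) (s i) (y i) * s i ^ 2
          * (d.U1 (y i) * d.wtSS (t i) (s i) (y i))) := by
  have hσsq := h.hasQuadExpansion_sigmaPsi.mul h.hasQuadExpansion_sigmaPsi hψ
  have hssq := HasQuadExpansion.of_bounded (x := ψ)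
    ((isBigO_one_mul h.s_bdd h.s_bdd).const_mul_left (1 / 2))
  have hθ : HasQuadExpansion l ψ
      (fun i => d.thetaPsi (ψ i) (t i) (s i) (y i) - d.Vs (t i) (s i))
      0 (fun i => d.thetaTilde (t i) (s i) (y i)) 0 :=
    (HasQuadExpansion.of_linear (isBigO_zero _ _) h.isBigO_thetaTilde).congr'
      (.of_forall fun i => by simp [thetaPsi]) .rfl .rfl .rfl
  have hθ' := hθ.add hθ
  refine ((hssq.mul hσsq hψ).mul ((h.hasQuadExpansion_wPsiSS.add
    (hθ'.mul h.hasQuadExpansion_wPsiSY hψ)).add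
    ((hθ.mul hθ hψ).mul h.hasQuadExpansion_wPsiYY hψ)) hψ).congr'
    (.of_forall fun i => ?_) (.of_forall fun i => ?_) (.of_forall fun i => ?_) ?_
  · simp only [Pi.add_apply, Pi.mul_apply]
    ring
  · simp
  · simp only [Pi.add_apply, Pi.mul_apply, Pi.zero_apply]
    ring
  · filter_upwards [hU2] with i hi
    simp only [Pi.add_apply, Pi.mul_apply, Pi.zero_apply]
    linear_combination d.sb (t i) (s i) ^ 2 * s i ^ 2 * d.thetaTilde (t i) (s i) (y i)
      * U2_mul_thetaTilde (t := t i) (s := s i) hi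

end Along

end HedgeData

theorem hjbi_second_order_general {ι : Type*} (d : HedgeData) {l : Filter ι} {ψ t s y : ι → ℝ}
    (hψ : Tendsto ψ l (𝓝[≠] 0))
    (hder : ∀ᶠ i in l, d.DerivativesAt (t i) (s i) (y i))
    (hnd : ∀ᶠ i in l, d.NondegenerateAt (t i) (s i) (y i))
    (hbdd : d.BoundedAlong l t s y)
    (hpde : ∀ᶠ i in l, d.CorrectorEquationsAt (t i) (s i) (y i)) :
    (fun i => d.wPsiT (ψ i) (t i) (s i) (y i) +
      d.Ham (ψ i) (t i) (s i) (y i) (d.thetaPsi (ψ i) (t i) (s i) (y i))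
        (d.sigmaPsi (ψ i) (t i) (s i) (y i))) =O[l] (ψ ^ 3) := by
  have hψ₁ : ψ =O[l] (1 : ι → ℝ) := (hψ.mono_right nhdsWithin_le_nhds).isBigO_one ℝ
  have hHam := ((HedgeData.hasQuadExpansion_penalty hψ hder hnd hbdd).add
    (hbdd.hasQuadExpansion_mismatch hψ₁)).add
    (hbdd.hasQuadExpansion_diffusion hψ₁ (hnd.mono fun _ hi => hi.U2_ne))
  refine (hbdd.hasQuadExpansion_wPsiT.add hHam).isBigO_cube (.of_eq (by simp)) ?_ ?_
  · filter_upwards [hnd, hpde] with i hi hpdei using hpdei.first_order_eq_zero hi.f2_ne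
  · filter_upwards [hnd, hpde] with i hi hpdei using hpdei.second_order_eq_zero hi.f2_ne hi.U1_ne

namespace HedgeData

/-- The domain `D = (0, T) × (1/K, K) × (y_l, y_u)`. -/
def domain (d : HedgeData) : Set (ℝ × ℝ × ℝ) :=
  Ioo 0 d.T ×ˢ Ioo d.K⁻¹ d.K ×ˢ Ioo d.yl d.yu

section Points

variable {d : HedgeData} {t s y : ℝ}

lemma Assumptions.derivativesAt (hd : d.Assumptions) (h : (t, s, y) ∈ d.domain) :
    d.DerivativesAt t s y where
  V_s := hd.V_derivS t h.1 s h.2.1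
  V_ss := hd.V_derivSS t h.1 s h.2.1
  f_1 := hd.f_deriv1 t s y
  f_2 := hd.f_deriv2 t s y
  f_3 := hd.f_deriv3 t s y
  f_4 := hd.f_deriv4 t s y
  f_4_cont := hd.f4_cont t s y
  U_1 := hd.U_deriv1 y
  U_2 := hd.U_deriv2 y
  U_3 := hd.U_deriv3 y
  wt := hd.wt_deriv t h.1 s h.2.1 y h.2.2
  wh := hd.wh_deriv t h.1 s h.2.1 y h.2.2

lemma Assumptions.sb_mem_Icc (hd : d.Assumptions) (h : (t, s, y) ∈ d.domain) :
    d.sb t s ∈ Icc 0 d.K :=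
  hd.sb_mem t (Ioo_subset_Icc_self h.1) s (Ioo_subset_Icc_self h.2.1)

lemma Assumptions.closedBall_sb_subset (hd : d.Assumptions) (h : (t, s, y) ∈ d.domain) :
    Metric.closedBall (d.sb t s) d.eps ⊆ Icc 0 d.K := by
  have ht := Ioo_subset_Icc_self h.1
  rw [Real.closedBall_eq_Icc]
  exact Icc_subset_Icc (sub_nonneg.2 (hd.sb_lb t ht s h.2.1))
    (le_sub_iff_add_le.1 (hd.sb_ub t ht s h.2.1))

lemma Assumptions.f2_sb_mem_Icc (hd : d.Assumptions) (h : (t, s, y) ∈ d.domain) :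
    d.f2 t s y (d.sb t s) ∈ Icc d.K⁻¹ d.K :=
  one_div d.K ▸ hd.f2_bdd t h.1 s h.2.1 y h.2.2 _ (hd.sb_mem_Icc h)

lemma Assumptions.f2_sb_pos (hd : d.Assumptions) (h : (t, s, y) ∈ d.domain) :
    0 < d.f2 t s y (d.sb t s) :=
  (inv_pos.2 (one_pos.trans hd.hK)).trans_le (hd.f2_sb_mem_Icc h).1

lemma Assumptions.nondegenerateAt (hd : d.Assumptions) (h : (t, s, y) ∈ d.domain) :
    d.NondegenerateAt t s y where
  f_sb := (hd.f_min t h.1 s h.2.1 y h.2.2).1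
  f1_sb := (hd.f_min t h.1 s h.2.1 y h.2.2).2
  f2_ne := (hd.f2_sb_pos h).ne'
  U1_ne := (hd.U1_pos y).ne'
  U2_ne := (hd.U2_neg y).ne

lemma PDEAssumptions.correctorEquationsAt (hpde : d.PDEAssumptions) (h : (t, s, y) ∈ d.domain) :
    d.CorrectorEquationsAt t s y where
  wt := hpde.pde_wt t h.1 s h.2.1 y h.2.2
  wh := hpde.pde_wh t h.1 s h.2.1 y h.2.2

end Points

section Families

variable {ι : Type*} {d : HedgeData} {l : Filter ι} {t s y : ι → ℝ}

lemma Assumptions.isBigO_corrections (hd : d.Assumptions)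
    (h : ∀ᶠ i in l, (t i, s i, y i) ∈ d.domain) :
    ∀ w ∈ [d.wt, d.wtT, d.wtS, d.wtY, d.wtSS, d.wtSY, d.wtYY,
        d.wh, d.whT, d.whS, d.whY, d.whSS, d.whSY, d.whYY],
      (fun i => w (t i) (s i) (y i)) =O[l] (1 : ι → ℝ) := by
  have h_closed : ∀ᶠ i in l, (t i, s i, y i) ∈ Icc 0 d.T ×ˢ Icc d.K⁻¹ d.K ×ˢ Icc d.yl d.yu :=
    h.mono fun _ hi => Set.prod_mono Ioo_subset_Icc_self
      (Set.prod_mono Ioo_subset_Icc_self Ioo_subset_Icc_self) hi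
  have h_compact : IsCompact (Icc 0 d.T ×ˢ Icc d.K⁻¹ d.K ×ˢ Icc d.yl d.yu) :=
    isCompact_Icc.prod (isCompact_Icc.prod isCompact_Icc)
  have h_wt : ∀ w ∈ d.wt :: [d.wtT, d.wtS, d.wtY, d.wtSS, d.wtSY, d.wtYY],
      (fun i => w (t i) (s i) (y i)) =O[l] (1 : ι → ℝ) := List.forall_mem_cons.2
    ⟨isBigO_one_of_continuousOn_isCompact hd.wt_cont h_compact h_closed, fun w hw =>
      isBigO_one_of_norm_le (h.mono fun _ hi => hd.wt_bdd w hw _ hi.1 _ hi.2.1 _ hi.2.2)⟩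
  have h_wh : ∀ w ∈ d.wh :: [d.whT, d.whS, d.whY, d.whSS, d.whSY, d.whYY],
      (fun i => w (t i) (s i) (y i)) =O[l] (1 : ι → ℝ) := List.forall_mem_cons.2
    ⟨isBigO_one_of_continuousOn_isCompact hd.wh_cont h_compact h_closed, fun w hw =>
      isBigO_one_of_norm_le (h.mono fun _ hi => hd.wh_bdd w hw _ hi.1 _ hi.2.1 _ hi.2.2)⟩
  exact List.forall_mem_append.2 ⟨h_wt, h_wh⟩

lemma Assumptions.boundedAlong (hd : d.Assumptions)
    (h : ∀ᶠ i in l, (t i, s i, y i) ∈ d.domain) : d.BoundedAlong l t s y := by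
  have bdd_of_continuous {u : ℝ → ℝ} (hu : Continuous u) :
      (fun i => u (y i)) =O[l] (1 : ι → ℝ) :=
    isBigO_one_of_continuousOn_isCompact hu.continuousOn isCompact_Icc
      (h.mono fun i hi => Ioo_subset_Icc_self hi.2.2)
  have hU1 : Continuous d.U1 := continuous_iff_continuousAt.2 fun z => (hd.U_deriv2 z).continuousAt
  have hU2 : Continuous d.U2 := continuous_iff_continuousAt.2 fun z => (hd.U_deriv3 z).continuousAt
  refine ⟨?s, ?sb, ?Vss, ?U, ?U2_inv, ?f2_inv, ?f, ?f4, hd.isBigO_corrections h⟩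
  case s =>
    exact isBigO_one_of_continuousOn_isCompact continuousOn_id isCompact_Icc
      (h.mono fun i hi => Ioo_subset_Icc_self hi.2.1)
  case sb =>
    refine isBigO_one_of_norm_le (C := d.K) (h.mono fun i hi => ?_)
    exact (Real.norm_of_nonneg (hd.sb_mem_Icc hi).1).trans_le (hd.sb_mem_Icc hi).2
  case Vss =>
    exact isBigO_one_of_norm_le (h.mono fun i hi => hd.Vss_bdd _ hi.1 _ hi.2.1)
  case U =>
    simp only [List.forall_mem_cons, List.not_mem_nil, false_imp_iff, implies_true, and_true]
    exact ⟨bdd_of_continuous hU1, bdd_of_continuous hU2, bdd_of_continuous hd.U3_cont⟩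
  case U2_inv =>
    exact bdd_of_continuous (hU2.inv₀ fun z => (hd.U2_neg z).ne)
  case f2_inv =>
    refine isBigO_one_of_norm_le (C := d.K) (h.mono fun i hi => ?_)
    rw [norm_inv, Real.norm_of_nonneg (hd.f2_sb_pos hi).le]
    exact inv_le_of_inv_le₀ (one_pos.trans hd.hK) (hd.f2_sb_mem_Icc hi).1
  case f =>
    simp only [List.forall_mem_cons, List.not_mem_nil, false_imp_iff, implies_true, and_true]
    refine ⟨isBigO_one_of_norm_le (C := d.K) (h.mono fun i hi => ?_),
      isBigO_one_of_norm_le (h.mono fun i hi =>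
        (hd.f34_bdd _ hi.1 _ hi.2.1 _ hi.2.2 _ (hd.sb_mem_Icc hi)).1)⟩
    exact (Real.norm_of_nonneg (hd.f2_sb_pos hi).le).trans_le (hd.f2_sb_mem_Icc hi).2
  case f4 =>
    exact ⟨d.eps, hd.heps, d.K, h.mono fun i hi ς hς =>
      (hd.f34_bdd _ hi.1 _ hi.2.1 _ hi.2.2 ς (hd.closedBall_sb_subset hi hς)).2⟩

end Families

lemma Assumptions.isBigO_residual {d : HedgeData} (hd : d.Assumptions)
    (hpde : d.PDEAssumptions) :
    (fun q : ℝ × ℝ × ℝ × ℝ => d.wPsiT q.1 q.2.1 q.2.2.1 q.2.2.2 +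
      d.Ham q.1 q.2.1 q.2.2.1 q.2.2.2 (d.thetaPsi q.1 q.2.1 q.2.2.1 q.2.2.2)
        (d.sigmaPsi q.1 q.2.1 q.2.2.1 q.2.2.2)) =O[𝓝[>] 0 ×ˢ 𝓟 d.domain] fun q => q.1 ^ 3 := by
  have hmem : ∀ᶠ q in 𝓝[>] (0 : ℝ) ×ˢ 𝓟 d.domain, (q.2.1, q.2.2.1, q.2.2.2) ∈ d.domain :=
    tendsto_snd.eventually (mem_principal_self d.domain)
  have hψ : Tendsto Prod.fst (𝓝[>] (0 : ℝ) ×ˢ 𝓟 d.domain) (𝓝[≠] 0) :=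
    tendsto_fst.mono_right (nhdsGT_le_nhdsNE 0)
  exact hjbi_second_order_general d hψ (hmem.mono fun _ => hd.derivativesAt)
    (hmem.mono fun _ => hd.nondegenerateAt) (hd.boundedAlong hmem)
    (hmem.mono fun _ => hpde.correctorEquationsAt)

end HedgeData

/-- **Second-order approximate solution property of the HJBI equation along the candidate
strategy and candidate volatility:** there are `C > 0` and `ψ₀ > 0` such that for all
`(t,s,y) ∈ D` and `ψ ∈ (0,ψ₀)`,
`|w^ψ_t + H^ψ(t,s,y; θ^ψ(t,s,y), σ^ψ(t,s,y))| ≤ C ψ³`. -/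
theorem hjbi_second_order (d : HedgeData) (hd : d.Assumptions) (hpde : d.PDEAssumptions) :
    ∃ C > (0:ℝ), ∃ ψ₀ > (0:ℝ),
      ∀ t ∈ Ioo (0:ℝ) d.T, ∀ s ∈ Ioo d.K⁻¹ d.K, ∀ y ∈ Ioo d.yl d.yu, ∀ ψ ∈ Ioo (0:ℝ) ψ₀,
        |d.wPsiT ψ t s y + d.Ham ψ t s y (d.thetaPsi ψ t s y) (d.sigmaPsi ψ t s y)|
          ≤ C * ψ ^ 3 := by
  obtain ⟨C, hC, ψ₀, hψ₀, hbound⟩ := exists_pos_forall_Ioo_norm_le_of_isBigO (g := (· ^ 3))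
    (hd.isBigO_residual hpde)
  exact ⟨C, hC, ψ₀, hψ₀, fun t ht s hs y hy ψ hψ => by
    simpa [abs_of_pos hψ.1] using hbound (t, s, y) ⟨ht, hs, hy⟩ ψ hψ⟩
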